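/- arXiv:math/0611057 — 3 statements merged into one kernel-verified Lean document; each statement's English description precedes it below -/
import Mathlib

section
/- The polynomials s_n(z) = z^n S_{2n−1}(π/√z) are orthogonal with respect to the linear functional L[f] = ∑_{ν∈ℤ\{0}} (1/ν²) f(1/ν²); that is, L[s_m · s_n] = 0 for all m ≠ n. -/
open Real

noncomputable def legP : ℕ → Polynomial ℝ
  | 0 => 1
  | 1 => Polynomial.X
  | (n + 2) => Polynomial.C (1 / ((n : ℝ) + 2)) *
      ((2 * (n : Polynomial ℝ) + 3) * Polynomial.X * legP (n + 1) - ((n : Polynomial ℝ) + 1) * legP n)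

lemma legP_rec (n : ℕ) : ((n : Polynomial ℝ) + 2) * legP (n + 2) =
    (2 * (n : Polynomial ℝ) + 3) * Polynomial.X * legP (n + 1) - ((n : Polynomial ℝ) + 1) * legP n := by
  have h : ((n : Polynomial ℝ) + 2) * Polynomial.C (1 / ((n : ℝ) + 2)) = 1 := by
    have : ((n : Polynomial ℝ) + 2) = Polynomial.C ((n : ℝ) + 2) := by
      simp only [map_add, map_natCast, map_ofNat]
    rw [this, ← Polynomial.C_mul, mul_one_div_cancel (by positivity), Polynomial.C_1]
  rw [legP, ← mul_assoc, h, one_mul]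

open Polynomial in
lemma legP_AB (n : ℕ) :
    derivative (legP (n + 1)) = X * derivative (legP n) + ((n : Polynomial ℝ) + 1) * legP n ∧
    X * derivative (legP (n + 1)) = derivative (legP n) + ((n : Polynomial ℝ) + 1) * legP (n + 1) := by
  induction n with
  | zero => simp [legP]
  | succ n ih =>
    obtain ⟨hA, hB⟩ := ih
    have hn : ((n : Polynomial ℝ) + 2) ≠ 0 := by
      have : ((n : Polynomial ℝ) + 2) = ((n + 2 : ℕ) : Polynomial ℝ) := by push_cast; ring
      rw [this]; exact Nat.cast_ne_zero.mpr (by omega)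
    have hr := legP_rec n
    have hd := congrArg derivative hr
    simp only [derivative_mul, derivative_add, derivative_sub, derivative_natCast, derivative_X,
      derivative_ofNat, derivative_one] at hd
    have hA' : derivative (legP (n + 2)) =
        X * derivative (legP (n + 1)) + ((n : Polynomial ℝ) + 2) * legP (n + 1) := by
      apply mul_left_cancel₀ hn
      linear_combination hd + ((n : Polynomial ℝ) + 1) * hB
    refine ⟨?_, ?_⟩
    · push_cast
      linear_combination hA'
    · push_cast
      linear_combination X * hA' - hr + X * hB - hA

open Polynomial in
lemma legP_ode (n : ℕ) :
    derivative ((X ^ 2 - 1) * derivative (legP n)) =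
      ((n : Polynomial ℝ) * ((n : Polynomial ℝ) + 1)) * legP n := by
  cases n with
  | zero => simp [legP]
  | succ n =>
    obtain ⟨hA, hB⟩ := legP_AB n
    have hD : (X ^ 2 - 1) * derivative (legP (n + 1)) =
        ((n : Polynomial ℝ) + 1) * (X * legP (n + 1) - legP n) := by
      linear_combination X * hB - hA
    rw [hD]
    simp only [derivative_mul, derivative_add, derivative_sub, derivative_natCast, derivative_X,
      derivative_one]
    push_cast
    linear_combination ((n : Polynomial ℝ) + 1) * hB

lemma legP_one (n : ℕ) : (legP n).eval 1 = 1 ∧ (legP (n+1)).eval 1 = 1 := by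
  induction n with
  | zero => simp [legP]
  | succ n ih =>
    refine ⟨ih.2, ?_⟩
    have := congrArg (Polynomial.eval 1) (legP_rec n)
    simp [ih.1, ih.2] at this
    have h2 : ((n : ℝ) + 2) ≠ 0 := by positivity
    apply mul_left_cancel₀ h2
    linear_combination this

lemma legP_neg_one (n : ℕ) : (legP n).eval (-1) = (-1) ^ n ∧
    (legP (n+1)).eval (-1) = (-1) ^ (n + 1) := by
  induction n with
  | zero => simp [legP]
  | succ n ih =>
    refine ⟨ih.2, ?_⟩
    have := congrArg (Polynomial.eval (-1)) (legP_rec n)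
    simp [ih.1, ih.2] at this
    have h2 : ((n : ℝ) + 2) ≠ 0 := by positivity
    apply mul_left_cancel₀ h2
    rw [this]
    ring

lemma poly_integral_deriv (p : Polynomial ℝ) :
    ∫ x in (-1:ℝ)..1, (Polynomial.derivative p).eval x = p.eval 1 - p.eval (-1) :=
  intervalIntegral.integral_eq_sub_of_hasDerivAt (fun x _ => p.hasDerivAt x)
    ((Polynomial.continuous _).intervalIntegrable _ _)

open Polynomial in
lemma legP_orth (m n : ℕ) (h : m ≠ n) :
    ∫ x in (-1:ℝ)..1, (legP m * legP n).eval x = 0 := by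
  have hW : derivative ((X ^ 2 - 1) * derivative (legP n) * legP m
      - (X ^ 2 - 1) * derivative (legP m) * legP n) =
      C ((n : ℝ) * (n + 1) - m * (m + 1)) * (legP m * legP n) := by
    have h1 := legP_ode n
    have h2 := legP_ode m
    rw [derivative_sub, derivative_mul, h1, derivative_mul, h2]
    simp only [C_sub, C_mul, C_add, C_1, map_natCast]
    ring
  have h3 := poly_integral_deriv ((X ^ 2 - 1) * derivative (legP n) * legP m
      - (X ^ 2 - 1) * derivative (legP m) * legP n)
  rw [hW] at h3
  simp only [eval_mul, eval_C, intervalIntegral.integral_const_mul, eval_sub, eval_pow, eval_X,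
    eval_one] at h3
  have hc : ((n : ℝ) * (n + 1) - m * (m + 1)) ≠ 0 := by
    have : ((n : ℝ) * (n + 1) - m * (m + 1)) = (n - m) * (n + m + 1) := by ring
    rw [this]
    refine mul_ne_zero (sub_ne_zero.mpr (by exact_mod_cast h.symm)) (by positivity)
  simp only [eval_mul]
  norm_num at h3
  rcases h3 with h3 | h3
  · exact absurd h3 hc
  · exact h3

noncomputable def polyF (p : Polynomial ℝ) (k : ℤ) : ℂ :=
  fourierCoeffOn (show (-1:ℝ) < 1 by norm_num) (fun x => ((p.eval x : ℝ) : ℂ)) k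

lemma poly_cont (p : Polynomial ℝ) : Continuous (fun x : ℝ => ((p.eval x : ℝ) : ℂ)) :=
  Complex.continuous_ofReal.comp p.continuous

lemma polyF_add (p q : Polynomial ℝ) (k : ℤ) : polyF (p + q) k = polyF p k + polyF q k := by
  unfold polyF
  simp only [fourierCoeffOn_eq_integral, ← smul_add]
  rw [← intervalIntegral.integral_add]
  · simp [mul_add]
  all_goals
    apply Continuous.intervalIntegrable
    exact (((map_continuous (fourier (-k))).comp (AddCircle.continuous_mk' _))).mul (poly_cont _)

lemma polyF_smul (c : ℝ) (p : Polynomial ℝ) (k : ℤ) :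
    polyF (Polynomial.C c * p) k = c * polyF p k := by
  unfold polyF
  rw [← fourierCoeffOn.const_mul]
  simp

lemma polyF_deriv (p : Polynomial ℝ) (k : ℤ) (hk : k ≠ 0) :
    polyF p k = 1 / (-2 * π * Complex.I * k) *
      (fourier (-k) ((-1 : ℝ) : AddCircle ((1:ℝ) - (-1))) * ((p.eval 1 - p.eval (-1) : ℝ) : ℂ)
        - 2 * polyF (Polynomial.derivative p) k) := by
  unfold polyF
  rw [fourierCoeffOn_of_hasDerivAt (f' := fun x => (((Polynomial.derivative p).eval x : ℝ) : ℂ))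
    _ hk (fun x _ => (p.hasDerivAt x).ofReal_comp)
    ((poly_cont _).intervalIntegrable _ _)]
  push_cast
  norm_num

lemma polyF_zero (p : Polynomial ℝ) : polyF p 0 = 
   (((1/2) * ∫ x in (-1:ℝ)..1, p.eval x : ℝ) : ℂ) := by
  unfold polyF
  rw [fourierCoeffOn_eq_integral]
  simp [intervalIntegral.integral_ofReal]
  norm_num

lemma polyF_parseval (p : Polynomial ℝ) :
    HasSum (fun k => ‖polyF p k‖ ^ 2) ((1/2) * ∫ x in (-1:ℝ)..1, (p * p).eval x) := by
  have hm : MeasureTheory.MemLp (fun x : ℝ => ((p.eval x : ℝ) : ℂ)) 2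
      (MeasureTheory.volume.restrict (Set.Ioc (-1:ℝ) 1)) := by
    obtain ⟨B, hB⟩ := (isCompact_Icc (a := (-1:ℝ)) (b := 1)).exists_bound_of_continuousOn
      (poly_cont p).continuousOn
    refine MeasureTheory.MemLp.of_bound (poly_cont p).aestronglyMeasurable B ?_
    filter_upwards [MeasureTheory.ae_restrict_mem measurableSet_Ioc] with x hx
    exact hB x (Set.Ioc_subset_Icc_self hx)
  have := hasSum_sq_fourierCoeffOn (show (-1:ℝ) < 1 by norm_num) hm
  have e : ((1:ℝ) - (-1))⁻¹ • (∫ x in (-1:ℝ)..1, ‖((p.eval x : ℝ) : ℂ)‖ ^ 2) =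
      (1/2) * ∫ x in (-1:ℝ)..1, (p * p).eval x := by
    simp only [Complex.norm_real, Real.norm_eq_abs, sq_abs, Polynomial.eval_mul, ← pow_two,
      smul_eq_mul]
    norm_num
  rw [e] at this
  exact this

noncomputable def oddK (n : ℕ) : ℝ := ∏ j ∈ Finset.range n, (2 * (j : ℝ) + 3)

lemma oddK_ne (n : ℕ) : oddK n ≠ 0 :=
  Finset.prod_ne_zero_iff.mpr fun j _ => by positivity

noncomputable def bdE (k : ℤ) : ℂ := fourier (-k) ((-1 : ℝ) : AddCircle ((1:ℝ) - (-1)))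

lemma bdE_norm (k : ℤ) : ‖bdE k‖ = 1 := by
  unfold bdE
  rw [fourier_apply]
  exact Circle.norm_coe _

lemma polyF_one (k : ℤ) (hk : k ≠ 0) : polyF 1 k = 0 := by
  rw [polyF_deriv _ _ hk]
  simp [polyF, fourierCoeffOn_eq_integral]

lemma polyF_step (n : ℕ) (k : ℤ) (hk : k ≠ 0) :
    polyF (legP (n + 2)) k = polyF (legP n) k +
      (2 * n + 3) / (π * k * Complex.I) * polyF (legP (n + 1)) k := by
  have h1 := polyF_add (legP n) (legP (n + 2) + Polynomial.C (-1) * legP n) k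
  have h2 : legP n + (legP (n + 2) + Polynomial.C (-1) * legP n) = legP (n + 2) := by
    simp
  rw [h2] at h1
  rw [h1, polyF_deriv (legP (n + 2) + Polynomial.C (-1) * legP n) k hk]
  have h3 : Polynomial.derivative (legP (n + 2) + Polynomial.C (-1) * legP n) =
      Polynomial.C (2 * (n : ℝ) + 3) * legP (n + 1) := by
    have hA := (legP_AB (n + 1)).1
    have hB := (legP_AB n).2
    simp only [map_add, map_mul, map_neg, map_one, map_natCast, map_ofNat, Polynomial.derivative_mul,
      Polynomial.derivative_neg, Polynomial.derivative_one]
    push_cast at hA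
    linear_combination hA + hB
  rw [h3, polyF_smul]
  simp only [Polynomial.eval_add, Polynomial.eval_mul, Polynomial.eval_C,
    (legP_one n).1, (legP_neg_one n).1]
  have hpi : (π : ℂ) ≠ 0 := by exact_mod_cast pi_ne_zero
  have hk' : (k : ℂ) ≠ 0 := by exact_mod_cast hk
  have g1 : (legP (n + 2)).eval 1 = 1 := (legP_one (n + 1)).2
  have g2 : (legP (n + 2)).eval (-1) = (-1) ^ (n + 2) := (legP_neg_one (n + 1)).2
  rw [g1, g2]
  push_cast
  field_simp
  ring

lemma polyF_main (T : ℕ → ℝ → ℝ)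
    (hT0 : ∀ x, T 0 x = 1) (hT1 : ∀ x, T 1 x = 1)
    (hTrec : ∀ (n : ℕ) (x : ℝ),
      T (n + 2) x = T (n + 1) x - x ^ 2 / ((2 * (n : ℝ) + 3) * (2 * (n : ℝ) + 5)) * T n x)
    (k : ℤ) (hk : k ≠ 0) (n : ℕ) :
    polyF (legP (n + 1)) k = - bdE k / (π * k * Complex.I) * oddK n / (π * k * Complex.I) ^ n
        * T n (π * k) ∧
    polyF (legP (n + 2)) k = - bdE k / (π * k * Complex.I) * oddK (n + 1) /
        (π * k * Complex.I) ^ (n + 1) * T (n + 1) (π * k) := by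
  have hpi : (π : ℂ) ≠ 0 := by exact_mod_cast pi_ne_zero
  have hk' : (k : ℂ) ≠ 0 := by exact_mod_cast hk
  have h1 : polyF (legP 1) k = - bdE k / (π * k * Complex.I) := by
    rw [polyF_deriv _ _ hk]
    simp only [legP, Polynomial.derivative_X, polyF_one k hk, Polynomial.eval_X, bdE]
    push_cast
    field_simp
    ring
  induction n with
  | zero =>
    refine ⟨by simp [h1, oddK, hT0], ?_⟩
    rw [polyF_step 0 k hk, h1]
    simp only [legP, polyF_one k hk, oddK, hT1]
    simp
    ring
  | succ n ih =>
    refine ⟨ih.2, ?_⟩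
    rw [polyF_step (n + 1) k hk, ih.1, ih.2, hTrec]
    have e1 : oddK (n + 1) = oddK n * (2 * n + 3) := Finset.prod_range_succ _ _
    have e2 : oddK (n + 1 + 1) = oddK n * (2 * n + 3) * (2 * n + 5) := by
      rw [← e1]
      unfold oddK
      rw [Finset.prod_range_succ _ (n + 1)]
      push_cast; ring
    rw [e2, e1]
    have a1 : (2 * (n : ℂ) + 3) ≠ 0 := by exact_mod_cast (by positivity : (2 * (n : ℝ) + 3) ≠ 0)
    have a2 : (2 * (n : ℂ) + 5) ≠ 0 := by exact_mod_cast (by positivity : (2 * (n : ℝ) + 5) ≠ 0)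
    generalize T (n + 1) (π * k) = u
    generalize T n (π * k) = v
    push_cast
    have hI := Complex.I_sq
    generalize Complex.I = i at *
    have hi : i ≠ 0 := by rintro rfl; norm_num at hI
    simp only [pow_succ]
    field_simp
    ring_nf
    try simp only [hI]
    try ring

lemma T_even (T : ℕ → ℝ → ℝ)
    (hT0 : ∀ x, T 0 x = 1) (hT1 : ∀ x, T 1 x = 1)
    (hTrec : ∀ (n : ℕ) (x : ℝ),
      T (n + 2) x = T (n + 1) x - x ^ 2 / ((2 * (n : ℝ) + 3) * (2 * (n : ℝ) + 5)) * T n x)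
    (n : ℕ) (x : ℝ) : T n (-x) = T n x ∧ T (n + 1) (-x) = T (n + 1) x := by
  induction n with
  | zero => simp [hT0, hT1]
  | succ n ih => exact ⟨ih.2, by rw [hTrec, hTrec, ih.1, ih.2, neg_sq]⟩



/-- The polynomials `s_n(z) = z^n S_{2n−1}(π/√z)` are orthogonal with respect to the
linear functional `L[f] = ∑_{ν∈ℤ\{0}} (1/ν²) f(1/ν²)`: `L[s_m · s_n] = 0` for `m ≠ n`.
Here `T (n+1) x = S_n(x)` encodes `S_{−1} = S_0 = 1`,
`S_{n+1}(x) = S_n(x) − (x²/((2n+3)(2n+5))) S_{n−1}(x)`. -/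
theorem s_orthogonal (T : ℕ → ℝ → ℝ)
    (hT0 : ∀ x, T 0 x = 1) (hT1 : ∀ x, T 1 x = 1)
    (hTrec : ∀ (n : ℕ) (x : ℝ),
      T (n + 2) x = T (n + 1) x - x ^ 2 / ((2 * (n : ℝ) + 3) * (2 * (n : ℝ) + 5)) * T n x)
    (s : ℕ → ℝ → ℝ)
    (hs : ∀ (n : ℕ) (z : ℝ), s n z = z ^ n * T (2 * n) (π / Real.sqrt z)) :
    ∀ m n : ℕ, m ≠ n →
      ∑' ν : {ν : ℤ // ν ≠ 0},
        (1 / ((ν : ℤ) : ℝ) ^ 2) * s m (1 / ((ν : ℤ) : ℝ) ^ 2) * s n (1 / ((ν : ℤ) : ℝ) ^ 2)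
        = 0 := by
  intro m n hmn
  have hcoef : ∀ (n : ℕ) (k : ℤ), k ≠ 0 → polyF (legP (2 * n + 1)) k =
      - bdE k / (π * k * Complex.I) *
        ((oddK (2 * n) * (-1) ^ n / π ^ (2 * n) * s n (1 / (k : ℝ) ^ 2) : ℝ) : ℂ) := by
    intro n k hk
    have hk0 : (k : ℝ) ≠ 0 := by exact_mod_cast hk
    have hTs : T (2 * n) (π / Real.sqrt (1 / (k : ℝ) ^ 2)) = T (2 * n) (π * k) := by
      have : π / Real.sqrt (1 / (k : ℝ) ^ 2) = π * |(k : ℝ)| := by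
        rw [Real.sqrt_div zero_le_one, Real.sqrt_one, Real.sqrt_sq_eq_abs, div_div_eq_mul_div,
          div_one]
      rw [this]
      rcases abs_choice (k : ℝ) with h | h <;> rw [h]
      rw [mul_neg]
      exact (T_even T hT0 hT1 hTrec (2 * n) _).1
    rw [(polyF_main T hT0 hT1 hTrec k hk (2 * n)).1, hs, hTs]
    have e : ((π : ℂ) * k * Complex.I) ^ (2 * n) = (-1) ^ n * π ^ (2 * n) * (k : ℂ) ^ (2 * n) := by
      rw [mul_pow, mul_pow, pow_mul Complex.I, Complex.I_sq]; ring
    have e1 : ((-1 : ℂ) ^ n) * (-1) ^ n = 1 := by rw [← mul_pow]; norm_num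
    have e2 : ((-1 : ℂ) ^ n)⁻¹ = (-1) ^ n := by rw [← inv_pow]; norm_num
    rw [e]
    push_cast
    simp only [div_eq_mul_inv, mul_inv, e2, one_mul, ← inv_pow, ← pow_mul]
    ring
  set a : ℝ := oddK (2 * m) * (-1) ^ m / π ^ (2 * m) with ha
  set b : ℝ := oddK (2 * n) * (-1) ^ n / π ^ (2 * n) with hb
  have ha0 : a ≠ 0 := by
    have := oddK_ne (2 * m)
    have := pi_ne_zero
    rw [ha]; positivity
  have hb0 : b ≠ 0 := by
    have := oddK_ne (2 * n)
    have := pi_ne_zero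
    rw [hb]; positivity
  set p := legP (2 * m + 1) with hp
  set q := legP (2 * n + 1) with hq
  have hsum := ((polyF_parseval (p + q)).sub (polyF_parseval p)).sub (polyF_parseval q)
  have hint : (1/2) * (∫ x in (-1:ℝ)..1, ((p + q) * (p + q)).eval x)
      - (1/2) * (∫ x in (-1:ℝ)..1, (p * p).eval x)
      - (1/2) * (∫ x in (-1:ℝ)..1, (q * q).eval x) = 0 := by
    have h0 := legP_orth (2 * m + 1) (2 * n + 1) (by omega)
    have hexp : ∀ x : ℝ, ((p + q) * (p + q)).eval x =
        (p * p).eval x + (q * q).eval x + 2 * (p * q).eval x := by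
      intro x; simp; ring
    have hi : ∀ r : Polynomial ℝ,
        IntervalIntegrable (fun x => r.eval x) MeasureTheory.volume (-1) 1 :=
      fun r => r.continuous.intervalIntegrable _ _
    simp_rw [hexp]
    rw [intervalIntegral.integral_add ((hi _).add (hi _)) ((hi _).const_mul 2),
      intervalIntegral.integral_add (hi _) (hi _), intervalIntegral.integral_const_mul, h0]
    ring
  rw [hint] at hsum
  have hz : ∀ j : ℕ, polyF (legP (2 * j + 1)) 0 = 0 := by
    intro j
    rw [polyF_zero]
    have := legP_orth (2 * j + 1) 0 (by omega)
    simp only [legP.eq_1, mul_one] at this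
    rw [this]; simp
  have hsub := (hasSum_subtype_iff_of_support_subset (s := {ν : ℤ | ν ≠ 0}) (by
    intro k hk
    simp only [Set.mem_ofPred_eq]
    rintro rfl
    apply hk
    simp only [polyF_add, hp, hq, hz]
    simp)).mpr hsum
  have hterm : ∀ ν : {ν : ℤ // ν ≠ 0},
      ‖polyF (p + q) ν‖ ^ 2 - ‖polyF p ν‖ ^ 2 - ‖polyF q ν‖ ^ 2 =
      (2 * a * b / π ^ 2) * ((1 / ((ν : ℤ) : ℝ) ^ 2) * s m (1 / ((ν : ℤ) : ℝ) ^ 2) *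
        s n (1 / ((ν : ℤ) : ℝ) ^ 2)) := by
    rintro ⟨k, hk⟩
    have hk0 : (k : ℝ) ≠ 0 := by exact_mod_cast hk
    have hE : ‖-bdE k / (π * k * Complex.I)‖ ^ 2 = 1 / (π ^ 2 * (k : ℝ) ^ 2) := by
      rw [norm_div, norm_neg, bdE_norm, norm_mul, norm_mul, Complex.norm_I, Complex.norm_real,
        Complex.norm_intCast, div_pow, mul_pow, mul_pow, Real.norm_eq_abs, sq_abs, sq_abs]
      norm_num
    have hcm := hcoef m k hk
    have hcn := hcoef n k hk
    rw [← ha, ← hp] at hcm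
    rw [← hb, ← hq] at hcn
    clear_value a b
    rw [polyF_add, hcm, hcn, ← mul_add, ← Complex.ofReal_add]
    simp only [norm_mul, mul_pow, hE, Complex.norm_real, Real.norm_eq_abs, sq_abs]
    have := pi_ne_zero
    field_simp
    ring
  have hfin : ∑' ν : {ν : ℤ // ν ≠ 0}, (2 * a * b / π ^ 2) *
      ((1 / ((ν : ℤ) : ℝ) ^ 2) * s m (1 / ((ν : ℤ) : ℝ) ^ 2) *
        s n (1 / ((ν : ℤ) : ℝ) ^ 2)) = 0 := by
    simp_rw [← hterm]
    exact hsub.tsum_eq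
  rw [tsum_mul_left] at hfin
  have := pi_ne_zero
  exact (mul_eq_zero.mp hfin).resolve_left (by positivity)
end

section
/- For any polynomial p of degree at most 2n−1, the n-point Gaussian summation rule is exact: ∑_{k=1}^n w_k p(x_k) = ∑_{ν∈ℤ, ν≠0} (1/ν²) p(1/ν²), where x_k are the eigenvalues of the n×n Jacobi matrix with diagonal entries a_0 = π²/15, a_k = 2π²/((4k+1)(4k+5)) and off-diagonal entries √b_k with b_k = π⁴/((4k−1)(4k+1)²(4k+3)), and w_k = μ_0 · v_{k,1}², with v_{k,1} the first component of the normalized eigenvector for eigenvalue x_k and μ_0 = π²/3. -/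
open Real Polynomial

namespace GW

lemma sum_range_two_mul (f : ℕ → ℚ) (K : ℕ) :
    ∑ i ∈ Finset.range (2 * K), f i = ∑ j ∈ Finset.range K, (f (2 * j) + f (2 * j + 1)) := by
  induction K with
  | zero => simp
  | succ K ih =>
    rw [show 2 * (K + 1) = 2 * K + 1 + 1 by ring, Finset.sum_range_succ, Finset.sum_range_succ, ih,
      Finset.sum_range_succ]
    ring

lemma bern_half (m : ℕ) :
    ∑ i ∈ Finset.range (2 * (m + 2)),
      (_root_.bernoulli i * ((2 * m + 3).choose i : ℚ)) * 2 ^ i = 0 := by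
  have h := Polynomial.bernoulli_eval_one_sub (2 * m + 3) (1 / 2)
  have ho : (-1 : ℚ) ^ (2 * m + 3) = -1 := Odd.neg_one_pow ⟨m + 1, by ring⟩
  rw [ho] at h
  norm_num at h
  have h0 : (Polynomial.bernoulli (2 * m + 3)).eval (1 / 2 : ℚ) = 0 := by
    norm_num
    linarith
  rw [Polynomial.bernoulli, Polynomial.eval_finsetSum] at h0
  have h1 : ∑ i ∈ Finset.range (2 * (m + 2)),
      (_root_.bernoulli i * ((2 * m + 3).choose i : ℚ)) * 2 ^ i =
      2 ^ (2 * m + 3) * ∑ i ∈ Finset.range (2 * m + 3 + 1), Polynomial.eval (1 / 2 : ℚ)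
        ((Polynomial.monomial (2 * m + 3 - i))
          (_root_.bernoulli i * ((2 * m + 3).choose i : ℚ))) := by
    rw [Finset.mul_sum, show 2 * (m + 2) = 2 * m + 3 + 1 by ring]
    refine Finset.sum_congr rfl fun i hi => ?_
    have hi' : i ≤ 2 * m + 3 := by simpa [Nat.lt_succ_iff] using hi
    obtain ⟨d, hd⟩ := Nat.exists_eq_add_of_le hi'
    rw [Polynomial.eval_monomial, hd, Nat.add_sub_cancel_left, pow_add]
    have : (2 : ℚ) ^ d * (1 / 2) ^ d = 1 := by rw [← mul_pow]; norm_num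
    linear_combination (-(_root_.bernoulli i * ((i + d).choose i : ℚ)) * 2 ^ i) * this
  rw [h1, h0, mul_zero]

lemma bern_sum (m : ℕ) :
    ∑ j ∈ Finset.range (m + 1),
      _root_.bernoulli (2 * j + 2) * ((2 * m + 3).choose (2 * j + 2) : ℚ) * 2 ^ (2 * j + 2)
      = 2 * m + 2 := by
  have h := bern_half m
  rw [sum_range_two_mul, Finset.sum_range_succ'] at h
  have e : ∀ j ∈ Finset.range (m + 1),
      ((_root_.bernoulli (2 * (j + 1)) * ((2 * m + 3).choose (2 * (j + 1)) : ℚ)) * 2 ^ (2 * (j + 1))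
       + (_root_.bernoulli (2 * (j + 1) + 1) * ((2 * m + 3).choose (2 * (j + 1) + 1) : ℚ))
          * 2 ^ (2 * (j + 1) + 1)) =
      _root_.bernoulli (2 * j + 2) * ((2 * m + 3).choose (2 * j + 2) : ℚ) * 2 ^ (2 * j + 2) := by
    intro j _
    rw [bernoulli_eq_zero_of_odd (n := 2 * (j + 1) + 1) ⟨j + 1, rfl⟩ (by omega)]
    simp [mul_add]
  rw [Finset.sum_congr rfl e] at h
  norm_num at h
  linarith

/-- Coefficients of the normalized spherical Bessel functions (in `w = z²`). -/
noncomputable def c (k m : ℕ) : ℝ :=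
  (-1) ^ m / (m.factorial * 2 ^ m * (Nat.doubleFactorial (2 * k + 2 * m + 1) : ℝ))

noncomputable def f (k : ℕ) : PowerSeries ℝ := PowerSeries.mk (c k)

lemma f_rec (k : ℕ) :
    f k = PowerSeries.C (2 * (k : ℝ) + 3) * f (k + 1) - PowerSeries.X * f (k + 2) := by
  ext m
  have hp : ∀ n : ℕ, (Nat.doubleFactorial n : ℝ) ≠ 0 := fun n => by
    exact_mod_cast (Nat.doubleFactorial_pos n).ne'
  cases m with
  | zero =>
    simp only [f, map_sub, PowerSeries.coeff_C_mul, PowerSeries.coeff_zero_X_mul,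
      PowerSeries.coeff_mk, c]
    have h1 := Nat.doubleFactorial_add_two (2 * k + 1)
    have h2 := hp (2 * k + 1)
    rw [show 2 * (k + 1) + 2 * 0 + 1 = 2 * k + 1 + 2 by ring, h1]
    simp
    field_simp
    ring
  | succ m =>
    simp only [f, map_sub, PowerSeries.coeff_C_mul, PowerSeries.coeff_succ_X_mul,
      PowerSeries.coeff_mk, c]
    have h1 := Nat.doubleFactorial_add_two (2 * k + 2 * m + 3)
    have h2 := hp (2 * k + 2 * m + 3)
    have h3 : (m.factorial : ℝ) ≠ 0 := by exact_mod_cast m.factorial_ne_zero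
    rw [show 2 * (k + 1) + 2 * (m + 1) + 1 = 2 * k + 2 * m + 3 + 2 by ring,
      show 2 * (k + 2) + 2 * m + 1 = 2 * k + 2 * m + 3 + 2 by ring,
      show 2 * k + 2 * (m + 1) + 1 = 2 * k + 2 * m + 3 by ring, h1, Nat.factorial_succ]
    push_cast
    have h4 : (m : ℝ) + 1 ≠ 0 := by positivity
    have h5 : (2 * (k : ℝ) + 2 * m + 3 + 2) ≠ 0 := by positivity
    field_simp
    ring

lemma c_zero (m : ℕ) : c 0 m = (-1) ^ m / ((2 * m + 1).factorial : ℝ) := by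
  rw [c, Nat.factorial_eq_mul_doubleFactorial, Nat.doubleFactorial_two_mul]
  push_cast
  rw [show 2 * 0 + 2 * m + 1 = 2 * m + 1 by ring]
  congr 1
  ring

lemma c_one (m : ℕ) : c 1 m = (-1) ^ m * (2 * m + 2) / ((2 * m + 3).factorial : ℝ) := by
  rw [c, Nat.factorial_eq_mul_doubleFactorial, show 2 * m + 2 = 2 * (m + 1) by ring,
    Nat.doubleFactorial_two_mul, Nat.factorial_succ]
  push_cast
  rw [show 2 * 1 + 2 * m + 1 = 2 * (m + 1) + 1 by ring]
  have h2 : (Nat.doubleFactorial (2 * (m + 1) + 1) : ℝ) ≠ 0 := by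
    exact_mod_cast (Nat.doubleFactorial_pos _).ne'
  have h3 : (m.factorial : ℝ) ≠ 0 := by exact_mod_cast m.factorial_ne_zero
  have h4 : (m : ℝ) + 1 ≠ 0 := by positivity
  field_simp
  ring

/-- The normalized moments. -/
noncomputable def M (j : ℕ) : ℝ :=
  (-1) ^ j * 2 ^ (2 * j + 2) * (_root_.bernoulli (2 * j + 2) : ℝ) / ((2 * j + 2).factorial : ℝ)

lemma M_mul : PowerSeries.mk M * f 0 = f 1 := by
  ext m
  rw [PowerSeries.coeff_mul,
    Finset.Nat.sum_antidiagonal_eq_sum_range_succ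
      (fun i j => (PowerSeries.coeff i) (PowerSeries.mk M) * (PowerSeries.coeff j) (f 0))]
  simp only [f, PowerSeries.coeff_mk, c_zero, c_one]
  have h : (∑ j ∈ Finset.range (m + 1),
      (_root_.bernoulli (2 * j + 2) : ℝ) * ((2 * m + 3).choose (2 * j + 2) : ℝ) * 2 ^ (2 * j + 2))
      = 2 * m + 2 := by exact_mod_cast bern_sum m
  rw [← h, Finset.mul_sum, Finset.sum_div]
  refine Finset.sum_congr rfl fun j hj => ?_
  obtain ⟨d, rfl⟩ := Nat.exists_eq_add_of_le (show j ≤ m by simpa [Nat.lt_succ_iff] using hj)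
  rw [Nat.add_sub_cancel_left, M, Nat.cast_choose ℝ (show 2 * j + 2 ≤ 2 * (j + d) + 3 by omega),
    show 2 * (j + d) + 3 - (2 * j + 2) = 2 * d + 1 by omega, pow_add]
  have h1 : ((2 * j + 2).factorial : ℝ) ≠ 0 := by exact_mod_cast Nat.factorial_ne_zero _
  have h2 : ((2 * d + 1).factorial : ℝ) ≠ 0 := by exact_mod_cast Nat.factorial_ne_zero _
  have h3 : ((2 * (j + d) + 3).factorial : ℝ) ≠ 0 := by exact_mod_cast Nat.factorial_ne_zero _
  field_simp
  ring

lemma moment_hasSum (j : ℕ) :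
    HasSum (fun ν : {ν : ℤ // ν ≠ 0} => (1 / ((ν : ℤ) : ℝ) ^ 2) * (1 / ((ν : ℤ) : ℝ) ^ 2) ^ j)
      (π ^ (2 * j + 2) * M j) := by
  have h := hasSum_zeta_nat (k := j + 1) (by omega)
  have h2 : HasSum (fun ν : ℤ => (1 / (ν : ℝ) ^ 2) * (1 / (ν : ℝ) ^ 2) ^ j)
      (π ^ (2 * j + 2) * M j) := by
    have e : ∀ x : ℝ, 1 / x ^ 2 * (1 / x ^ 2) ^ j = 1 / x ^ (2 * (j + 1)) := fun x => by
      rw [← pow_succ', pow_mul]; simp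
    simp only [e]
    have := HasSum.of_nat_of_neg (f := fun ν : ℤ => 1 / (ν : ℝ) ^ (2 * (j + 1)))
      (by simpa using h) (by simpa [Even.neg_pow] using h)
    have e2 : π ^ (2 * j + 2) * M j = (-1 : ℝ) ^ (j + 1 + 1) * (2 : ℝ) ^ (2 * (j + 1) - 1) *
        π ^ (2 * (j + 1)) * _root_.bernoulli (2 * (j + 1)) / (2 * (j + 1)).factorial +
        (-1 : ℝ) ^ (j + 1 + 1) * (2 : ℝ) ^ (2 * (j + 1) - 1) *
        π ^ (2 * (j + 1)) * _root_.bernoulli (2 * (j + 1)) / (2 * (j + 1)).factorial -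
        1 / ((0 : ℤ) : ℝ) ^ (2 * (j + 1)) := by
      rw [M, show 2 * (j + 1) - 1 = 2 * j + 1 by omega, show 2 * (j + 1) = 2 * j + 2 by ring]
      simp
      ring
    rw [e2]
    exact this
  exact (hasSum_subtype_iff_of_support_subset (s := {ν : ℤ | ν ≠ 0}) (by
    intro ν hν h0
    simp [show ν = 0 from h0] at hν)).2 h2


noncomputable def g (k : ℕ) : PowerSeries ℝ := f k * (f 0)⁻¹

lemma f_zero_const : PowerSeries.constantCoeff (f 0) ≠ 0 := by
  rw [← PowerSeries.coeff_zero_eq_constantCoeff_apply]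
  simp [f, c]

lemma g_zero : g 0 = 1 := PowerSeries.mul_inv_cancel _ f_zero_const

lemma g_one : g 1 = PowerSeries.mk M := by
  rw [g, ← M_mul, mul_assoc, PowerSeries.mul_inv_cancel _ f_zero_const, mul_one]

lemma g_rec (k : ℕ) :
    g k = PowerSeries.C (2 * (k : ℝ) + 3) * g (k + 1) - PowerSeries.X * g (k + 2) := by
  simp only [g]
  rw [f_rec k]
  ring

lemma C_mul_inv (x : ℝ) (hx : x ≠ 0) :
    PowerSeries.C x * PowerSeries.C (1 / x) = (1 : PowerSeries ℝ) := by
  rw [← map_mul, mul_one_div_cancel hx, map_one]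

lemma g_three (k : ℕ) :
    g (2 * k + 3) = PowerSeries.C (1 / ((4 * (k : ℝ) + 5) * (4 * k + 7))) * g (2 * k + 1)
      + PowerSeries.X * (PowerSeries.C (2 / ((4 * (k : ℝ) + 5) * (4 * k + 9))) * g (2 * k + 3))
      + PowerSeries.X ^ 2 *
        (PowerSeries.C (1 / ((4 * (k : ℝ) + 7) * (4 * k + 9))) * g (2 * k + 5)) := by
  have h1 := g_rec (2 * k + 1)
  have h2 := g_rec (2 * k + 2)
  have h3 := g_rec (2 * k + 3)
  push_cast at h1 h2 h3
  rw [show 2 * (2 * (k : ℝ) + 1) + 3 = 4 * k + 5 by ring] at h1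
  rw [show 2 * (2 * (k : ℝ) + 2) + 3 = 4 * k + 7 by ring] at h2
  rw [show 2 * (2 * (k : ℝ) + 3) + 3 = 4 * k + 9 by ring] at h3
  have p5 : 4 * (k : ℝ) + 5 ≠ 0 := by positivity
  have p7 : 4 * (k : ℝ) + 7 ≠ 0 := by positivity
  have p9 : 4 * (k : ℝ) + 9 ≠ 0 := by positivity
  have i5 := C_mul_inv _ p5
  have i7 := C_mul_inv _ p7
  have i9 := C_mul_inv _ p9
  have ea : (2 / ((4 * (k : ℝ) + 5) * (4 * k + 9)))
      = (1 / (4 * (k : ℝ) + 5) + 1 / (4 * (k : ℝ) + 9)) * (1 / (4 * (k : ℝ) + 7)) := by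
    field_simp
    ring
  rw [ea, ← one_div_mul_one_div, ← one_div_mul_one_div]
  simp only [map_mul, map_add]
  generalize PowerSeries.C (4 * (k : ℝ) + 5) = c5 at *
  generalize PowerSeries.C (4 * (k : ℝ) + 7) = c7 at *
  generalize PowerSeries.C (4 * (k : ℝ) + 9) = c9 at *
  generalize PowerSeries.C (1 / (4 * (k : ℝ) + 5)) = d5 at *
  generalize PowerSeries.C (1 / (4 * (k : ℝ) + 7)) = d7 at *
  generalize PowerSeries.C (1 / (4 * (k : ℝ) + 9)) = d9 at *
  have e2 : d5 * (g (2 * k + 1) + PowerSeries.X * g (2 * k + 3)) = g (2 * k + 2) := by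
    linear_combination d5 * h1 + g (2 * k + 2) * i5
  have e4 : d9 * (g (2 * k + 3) + PowerSeries.X * g (2 * k + 5)) = g (2 * k + 4) := by
    linear_combination d9 * h3 + g (2 * k + 4) * i9
  have e3 : d7 * (g (2 * k + 2) + PowerSeries.X * g (2 * k + 4)) = g (2 * k + 3) := by
    linear_combination d7 * h2 + g (2 * k + 3) * i7
  linear_combination -e3 - d7 * e2 - d7 * PowerSeries.X * e4

lemma g_three_zero :
    g 1 = PowerSeries.C (1 / 3)
      + PowerSeries.X * (PowerSeries.C (1 / 15) * g 1)
      + PowerSeries.X ^ 2 * (PowerSeries.C (1 / 15) * g 3) := by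
  have h1 := g_rec 0
  have h2 := g_rec 1
  rw [g_zero] at h1
  norm_num at h1 h2
  have i5 := C_mul_inv 5 (by norm_num)
  have i3 := C_mul_inv 3 (by norm_num)
  rw [show (1 / 15 : ℝ) = 1 / 3 * (1 / 5) by norm_num, map_mul]
  generalize PowerSeries.C (1 / 3 : ℝ) = d3 at *
  generalize PowerSeries.C (1 / 5 : ℝ) = d5 at *
  have e2 : d5 * (g 1 + PowerSeries.X * g 3) = g 2 := by
    linear_combination d5 * h2 + g 2 * i5
  linear_combination -d3 * h1 - g 1 * i3 - d3 * PowerSeries.X * e2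

noncomputable def sq (k : ℕ) : ℝ := √(4 * (k : ℝ) + 3)

lemma sq_pos (k : ℕ) : 0 < sq k := Real.sqrt_pos.2 (by positivity)
lemma sq_sq (k : ℕ) : sq k * sq k = 4 * (k : ℝ) + 3 := Real.mul_self_sqrt (by positivity)

noncomputable def W (k : ℕ) : PowerSeries ℝ :=
  PowerSeries.X ^ k * (PowerSeries.C (sq k) * g (2 * k + 1))

noncomputable def S (m k : ℕ) : ℝ := sq 0 * π ^ (2 * m) * PowerSeries.coeff m (W k)

noncomputable def B (k : ℕ) : ℝ :=
  √(π ^ 4 / ((4 * (k : ℝ) - 1) * (4 * (k : ℝ) + 1) ^ 2 * (4 * (k : ℝ) + 3)))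

noncomputable def A (k : ℕ) : ℝ :=
  if k = 0 then π ^ 2 / 15 else 2 * π ^ 2 / ((4 * (k : ℝ) + 1) * (4 * (k : ℝ) + 5))

lemma B_succ (k : ℕ) : B (k + 1) = π ^ 2 * (1 / (sq k * (4 * k + 5) * sq (k + 1))) := by
  have h1 := sq_sq k
  have h2 := sq_sq (k + 1)
  have p1 := sq_pos k
  have p2 := sq_pos (k + 1)
  push_cast at h2
  rw [B, ← Real.sqrt_sq (show 0 ≤ π ^ 2 * (1 / (sq k * (4 * k + 5) * sq (k + 1))) by positivity)]
  congr 1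
  push_cast
  rw [show 4 * ((k : ℝ) + 1) - 1 = 4 * k + 3 by ring, ← h1, ← h2]
  field_simp
  ring

lemma S_of_lt (m k : ℕ) (h : m < k) : S m k = 0 := by
  rw [S, W, PowerSeries.coeff_X_pow_mul', if_neg (by omega), mul_zero]

lemma S_zero_col (m : ℕ) : S m 0 = 3 * π ^ (2 * m) * M m := by
  have h := sq_sq 0
  simp [S, W, g_one] at h ⊢
  linear_combination π ^ (2 * m) * M m * h

lemma W_zero : W 0 = PowerSeries.C (sq 0 / 3) + PowerSeries.X *
    (PowerSeries.C (1 / 15) * W 0 + PowerSeries.C (1 / (sq 0 * 5 * sq 1)) * W 1) := by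
  have h := g_three_zero
  have h1 := sq_sq 0
  have p1 := sq_pos 0
  have p2 := sq_pos 1
  have e : PowerSeries.C (1 / (sq 0 * 5 * sq 1)) * PowerSeries.C (sq 1)
      = PowerSeries.C (sq 0) * PowerSeries.C (1 / 15) := by
    rw [← map_mul, ← map_mul]
    congr 1
    field_simp
    norm_num at h1
    linarith
  have e0 : PowerSeries.C (sq 0 / 3) = PowerSeries.C (sq 0) * PowerSeries.C (1 / 3) := by
    rw [← map_mul]; congr 1; ring
  rw [e0]
  simp only [W]
  norm_num only
  linear_combination PowerSeries.C (sq 0) * h - PowerSeries.X ^ 2 * g 3 * e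

lemma W_succ (k : ℕ) : W (k + 1) = PowerSeries.X *
    (PowerSeries.C (1 / (sq k * (4 * k + 5) * sq (k + 1))) * W k
      + PowerSeries.C (2 / ((4 * (k : ℝ) + 5) * (4 * k + 9))) * W (k + 1)
      + PowerSeries.C (1 / (sq (k + 1) * (4 * k + 9) * sq (k + 2))) * W (k + 2)) := by
  have h := g_three k
  have h1 := sq_sq (k + 1)
  push_cast at h1
  have p0 := sq_pos k
  have p1 := sq_pos (k + 1)
  have p2 := sq_pos (k + 2)
  have e : PowerSeries.C (1 / (sq k * (4 * k + 5) * sq (k + 1))) * PowerSeries.C (sq k)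
      = PowerSeries.C (sq (k + 1)) * PowerSeries.C (1 / ((4 * (k : ℝ) + 5) * (4 * k + 7))) := by
    rw [← map_mul, ← map_mul]
    congr 1
    field_simp
    linarith
  have e' : PowerSeries.C (1 / (sq (k + 1) * (4 * k + 9) * sq (k + 2))) * PowerSeries.C (sq (k + 2))
      = PowerSeries.C (sq (k + 1)) * PowerSeries.C (1 / ((4 * (k : ℝ) + 7) * (4 * k + 9))) := by
    rw [← map_mul, ← map_mul]
    congr 1
    field_simp
    linarith
  simp only [W]
  rw [show 2 * (k + 1) + 1 = 2 * k + 3 by ring, show 2 * (k + 2) + 1 = 2 * k + 5 by ring]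
  linear_combination PowerSeries.X ^ (k + 1) * PowerSeries.C (sq (k + 1)) * h
    - PowerSeries.X ^ (k + 1) * g (2 * k + 1) * e - PowerSeries.X ^ (k + 3) * g (2 * k + 5) * e'

lemma S_zero (k : ℕ) : S 0 k = if k = 0 then 1 else 0 := by
  split_ifs with h
  · subst h
    have h := sq_sq 0
    rw [S, W_zero, map_add, PowerSeries.coeff_zero_X_mul]
    simp at h ⊢
    linear_combination h / 3
  · exact S_of_lt _ _ (by omega)

lemma S_succ_zero (m : ℕ) : S (m + 1) 0 = A 0 * S m 0 + B 1 * S m 1 := by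
  have hB := B_succ 0
  simp only [zero_add, Nat.cast_zero, mul_zero] at hB
  rw [hB]
  simp only [S]
  rw [W_zero, map_add, PowerSeries.coeff_succ_X_mul, map_add, PowerSeries.coeff_C_mul,
    PowerSeries.coeff_C_mul, PowerSeries.coeff_C, if_neg (by omega), ← W_zero, A, if_pos rfl]
  ring

lemma S_succ_succ (m k : ℕ) : S (m + 1) (k + 1) =
    B (k + 1) * S m k + A (k + 1) * S m (k + 1) + B (k + 2) * S m (k + 2) := by
  have hB := B_succ (k + 1)
  push_cast at hB
  rw [show 4 * ((k : ℝ) + 1) + 5 = 4 * k + 9 by ring] at hB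
  rw [hB, B_succ]
  simp only [S]
  rw [W_succ, PowerSeries.coeff_succ_X_mul, map_add, map_add, PowerSeries.coeff_C_mul,
    PowerSeries.coeff_C_mul, PowerSeries.coeff_C_mul, ← W_succ, A, if_neg (by omega)]
  push_cast
  rw [show 4 * ((k : ℝ) + 1) + 1 = 4 * k + 5 by ring,
    show 4 * ((k : ℝ) + 1) + 5 = 4 * k + 9 by ring]
  ring

/-- Entries of the infinite Jacobi matrix. -/
noncomputable def T (i j : ℕ) : ℝ :=
  (if j = i then A i else 0) + (if j = i + 1 then B (i + 1) else 0)
    + (if j + 1 = i then B i else 0)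

lemma T_sum (m i N : ℕ) (h : i + 1 < N) :
    ∑ j ∈ Finset.range N, T i j * S m j = S (m + 1) i := by
  simp only [T, add_mul, Finset.sum_add_distrib, ite_mul, zero_mul]
  rw [Finset.sum_ite_eq', Finset.sum_ite_eq', if_pos (by simp; omega), if_pos (by simp; omega)]
  cases i with
  | zero => simp [S_succ_zero]
  | succ i =>
    simp only [Nat.add_right_cancel_iff]
    rw [Finset.sum_ite_eq', if_pos (by simp; omega), S_succ_succ]
    ring

lemma key (n : ℕ) (s : ℕ → Fin n → ℝ) (h0 : ∀ i : Fin n, s 0 i = if (i : ℕ) = 0 then 1 else 0)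
    (hs : ∀ m i, s (m + 1) i = ∑ j : Fin n, T i j * s m j) :
    ∀ (m : ℕ) (i : Fin n), m + i ≤ 2 * n - 1 → s m i = S m i := by
  intro m
  induction m with
  | zero => intro i _; rw [h0, S_zero]
  | succ m ih =>
    intro i hi
    have e : ∀ j ∈ (Finset.univ : Finset (Fin n)), T i j * s m j = T i j * S m j := by
      intro j _
      by_cases hj : (j : ℕ) ≤ i + 1
      · rw [ih j (by omega)]
      · have : T i j = 0 := by
          rw [T, if_neg (by omega), if_neg (by omega), if_neg (by omega)]; simp
        rw [this, zero_mul, zero_mul]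
    rw [hs, Finset.sum_congr rfl e, Fin.sum_univ_eq_sum_range (fun j => T i j * S m j) n,
      ← T_sum m i (n + 1) (by omega), Finset.sum_range_succ]
    have : T i n * S m n = 0 := by
      have hin := i.2
      by_cases h : (i : ℕ) + 1 = n
      · rw [S_of_lt m n (by omega), mul_zero]
      · rw [T, if_neg (by omega), if_neg (by omega), if_neg (by omega)]; simp
    rw [this, add_zero]

end GW

/-- Golub–Welsch: the `n`-point Gaussian summation rule is exact on polynomials of
degree at most `2n−1`.  The nodes `x_k` are the eigenvalues of the symmetric tridiagonal
Jacobi matrix with diagonal `a_0 = π²/15`, `a_k = 2π²/((4k+1)(4k+5))` (`k ≥ 1`) and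
off-diagonal `√b_k`, `b_k = π⁴/((4k−1)(4k+1)²(4k+3))`, and the weights are
`w_k = μ_0 v_{k,1}²` with `v_{k,1}` the first component of the normalized eigenvector
for eigenvalue `x_k` and `μ_0 = π²/3`. -/
theorem gaussian_summation_golub_welsch (n : ℕ) (hn : 0 < n)
    (J : Matrix (Fin n) (Fin n) ℝ)
    (hJ : ∀ i j : Fin n,
      J i j =
        if i = j then (if (i : ℕ) = 0 then π ^ 2 / 15
          else 2 * π ^ 2 / ((4 * (i : ℝ) + 1) * (4 * (i : ℝ) + 5)))
        else if (i : ℕ) + 1 = (j : ℕ) ∨ (j : ℕ) + 1 = (i : ℕ) then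
          Real.sqrt (π ^ 4 /
            ((4 * (max (i : ℕ) (j : ℕ) : ℝ) - 1) * (4 * (max (i : ℕ) (j : ℕ) : ℝ) + 1) ^ 2 *
              (4 * (max (i : ℕ) (j : ℕ) : ℝ) + 3)))
        else 0)
    (hA : J.IsHermitian) :
    ∀ p : Polynomial ℝ, p.natDegree ≤ 2 * n - 1 →
      ∑ k : Fin n,
          (π ^ 2 / 3 * (hA.eigenvectorBasis k ⟨0, hn⟩) ^ 2) * p.eval (hA.eigenvalues k) =
        ∑' ν : {ν : ℤ // ν ≠ 0},
          (1 / ((ν : ℤ) : ℝ) ^ 2) * p.eval (1 / ((ν : ℤ) : ℝ) ^ 2) := by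
  have hT : ∀ i j : Fin n, J i j = GW.T i j := by
    intro i j
    rw [hJ, GW.T]
    by_cases h1 : i = j
    · subst h1
      simp [GW.A]
    · have h1' : (i : ℕ) ≠ j := fun h => h1 (Fin.ext h)
      rw [if_neg h1, if_neg (Ne.symm h1'), zero_add]
      by_cases h2 : (i : ℕ) + 1 = j
      · have hm : max (i : ℝ) (j : ℝ) = ((i + 1 : ℕ) : ℝ) := by
          rw [h2]; apply max_eq_right; rw [← h2]; push_cast; linarith
        rw [if_pos (Or.inl h2), if_pos h2.symm, if_neg (by omega), add_zero, hm, GW.B]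
      · by_cases h3 : (j : ℕ) + 1 = i
        · have hm : max (i : ℝ) (j : ℝ) = ((i : ℕ) : ℝ) := by
            apply max_eq_left; rw [← h3]; push_cast; linarith
          rw [if_pos (Or.inr h3), if_neg (Ne.symm h2), if_pos h3, zero_add, hm, GW.B]
        · rw [if_neg (by tauto), if_neg (Ne.symm h2), if_neg h3, zero_add]
  set s : ℕ → Fin n → ℝ := fun m i => ∑ k : Fin n,
    hA.eigenvectorBasis k ⟨0, hn⟩ * hA.eigenvectorBasis k i * hA.eigenvalues k ^ m with hs
  have hs0 : ∀ i : Fin n, s 0 i = if (i : ℕ) = 0 then 1 else 0 := by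
    intro i
    have hU := congrFun (congrFun (Matrix.mem_unitaryGroup_iff.1 hA.eigenvectorUnitary.2) i)
      ⟨0, hn⟩
    rw [Matrix.mul_apply] at hU
    simp only [Matrix.star_apply, Matrix.IsHermitian.eigenvectorUnitary_apply, star_trivial,
      Matrix.one_apply, Fin.ext_iff] at hU
    rw [← hU, hs]
    exact Finset.sum_congr rfl fun k _ => by ring
  have hs1 : ∀ m i, s (m + 1) i = ∑ j : Fin n, GW.T i j * s m j := by
    intro m i
    simp only [hs, Finset.mul_sum]
    rw [Finset.sum_comm]
    refine Finset.sum_congr rfl fun k _ => ?_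
    have hv := congrFun (hA.mulVec_eigenvectorBasis k) i
    simp only [Matrix.mulVec, dotProduct, Pi.smul_apply, smul_eq_mul, hT] at hv
    rw [pow_succ]
    trans (hA.eigenvectorBasis k ⟨0, hn⟩ * hA.eigenvalues k ^ m) *
      (hA.eigenvalues k * hA.eigenvectorBasis k i)
    · ring
    · rw [← hv, Finset.mul_sum]
      exact Finset.sum_congr rfl fun j _ => by ring
  intro p hp
  have hsum : HasSum (fun ν : {ν : ℤ // ν ≠ 0} =>
      (1 / ((ν : ℤ) : ℝ) ^ 2) * p.eval (1 / ((ν : ℤ) : ℝ) ^ 2))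
      (∑ m ∈ Finset.range (p.natDegree + 1), p.coeff m * (π ^ (2 * m + 2) * GW.M m)) := by
    have := hasSum_sum (s := Finset.range (p.natDegree + 1))
      (fun m _ => (GW.moment_hasSum m).mul_left (p.coeff m))
    convert! this using 2 with ν
    rw [Polynomial.eval_eq_sum_range, Finset.mul_sum]
    exact Finset.sum_congr rfl fun m _ => by ring
  rw [hsum.tsum_eq]
  simp only [Polynomial.eval_eq_sum_range, Finset.mul_sum]
  rw [Finset.sum_comm]
  refine Finset.sum_congr rfl fun m hm => ?_
  have hm' : m ≤ p.natDegree := by simpa [Nat.lt_succ_iff] using hm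
  have hk := GW.key n s hs0 hs1 m ⟨0, hn⟩ (by simp; omega)
  rw [GW.S_zero_col] at hk
  trans π ^ 2 / 3 * p.coeff m * s m ⟨0, hn⟩
  · rw [hs, Finset.mul_sum]
    exact Finset.sum_congr rfl fun k _ => by ring
  · rw [hk]; ring
end

section
/- For real a > 1 and integer n ≥ 1, the partial sums G_n(a) = 1/a² + 2∑_{k=1}^n 1/(a²+k²) satisfy G_n(a) = (π/a)coth(πa) − 2/n + 1/n² + (2a²−1)/(3n³) + O(a⁴/n⁴) as n → ∞, uniformly for a in compact subsets of (0,∞); in particular G(a) − G_n(a) = 2/n − 1/n² − (2a²−1)/(3n³) + O(a⁴/n⁴). -/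
open Real Filter Asymptotics

lemma aux_sum_Icc (n : ℕ) (f : ℕ → ℝ) :
    ∑ k ∈ Finset.Icc 1 n, f k = ∑ k ∈ Finset.range n, f (k + 1) := by
  induction n with
  | zero => simp
  | succ n ih => rw [Finset.sum_Icc_succ_top (by omega), ih, Finset.sum_range_succ]

lemma aux_tendsto_coth (a : ℝ) (ha : 0 < a) :
    Tendsto (fun n : ℕ => 1 / a ^ 2 + 2 * ∑ k ∈ Finset.Icc 1 n, 1 / (a ^ 2 + (k : ℝ) ^ 2)) atTop
      (nhds (π / a * (Real.cosh (π * a) / Real.sinh (π * a)))) := by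
  have hmem : (Complex.I * a : ℂ) ∈ Complex.integerComplement := by
    rintro ⟨m, hm⟩
    have := congrArg Complex.im hm
    simp at this
    exact ha.ne this
  have h := tendsto_logDeriv_euler_cot_sub hmem
  have h2 := (h.const_mul (Complex.I / a)).const_add (1 / (a : ℂ) ^ 2)
  have haC : (a : ℂ) ≠ 0 := by exact_mod_cast ha.ne'
  have hs : (Complex.sinh (π * a)) ≠ 0 := by
    have : Real.sinh (π * a) ≠ 0 := (Real.sinh_pos_iff.2 (by positivity)).ne'
    exact_mod_cast this
  have hI := Complex.I_mul_I
  have hI0 := Complex.I_ne_zero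
  have hlim : 1 / (a : ℂ) ^ 2 + Complex.I / a *
      (π * Complex.cot (π * (Complex.I * a)) - 1 / (Complex.I * a)) =
      ((π / a * (Real.cosh (π * a) / Real.sinh (π * a)) : ℝ) : ℂ) := by
    push_cast
    rw [Complex.cot, show (π : ℂ) * (Complex.I * a) = (π * a) * Complex.I by ring,
      Complex.cos_mul_I, Complex.sin_mul_I]
    field_simp
    ring
  rw [hlim] at h2
  refine tendsto_ofReal_iff.1 ?_
  refine h2.congr fun n => ?_
  rw [aux_sum_Icc n, Finset.mul_sum, Finset.mul_sum]
  push_cast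
  congr 1
  refine Finset.sum_congr rfl fun j _ => ?_
  rw [cotTerm_identity hmem]
  have h0 : ((a : ℂ) ^ 2 + ((j : ℂ) + 1) ^ 2) ≠ 0 := by
    have : (a ^ 2 + ((j : ℝ) + 1) ^ 2) ≠ 0 := by positivity
    exact_mod_cast this
  have h1 : (Complex.I * a + ((j : ℂ) + 1)) * (Complex.I * a - ((j : ℂ) + 1)) =
      -((a : ℂ) ^ 2 + ((j : ℂ) + 1) ^ 2) := by
    linear_combination (a : ℂ) ^ 2 * hI
  rw [h1]
  field_simp
  linear_combination (-1 : ℂ) * hI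

lemma aux_step (a : ℝ) (x : ℝ) (hx : 1 ≤ x) :
    |2 / (a ^ 2 + (x + 1) ^ 2) -
      ((- 2 / (x + 1) + 1 / (x + 1) ^ 2 + (2 * a ^ 2 - 1) / (3 * (x + 1) ^ 3)) -
       (- 2 / x + 1 / x ^ 2 + (2 * a ^ 2 - 1) / (3 * x ^ 3)))| ≤
    (1 + a ^ 2 + 2 * a ^ 4) * (1 / x ^ 4 - 1 / (x + 1) ^ 4) := by
  have hx0 : 0 < x := by linarith
  have hd : 0 < a ^ 2 + (x + 1) ^ 2 := by positivity
  have e : 2 / (a ^ 2 + (x + 1) ^ 2) -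
      ((- 2 / (x + 1) + 1 / (x + 1) ^ 2 + (2 * a ^ 2 - 1) / (3 * (x + 1) ^ 3)) -
       (- 2 / x + 1 / x ^ 2 + (2 * a ^ 2 - 1) / (3 * x ^ 3))) =
      - (1 / (3 * x ^ 3 * (x + 1) ^ 3)) +
        a ^ 2 * ((12 * x ^ 2 + 8 * x + 2) / (3 * x ^ 3 * (x + 1) ^ 4)) +
        2 * a ^ 4 * (1 / ((x + 1) ^ 4 * (a ^ 2 + (x + 1) ^ 2))) := by
    field_simp
    ring
  have eS : 1 / x ^ 4 - 1 / (x + 1) ^ 4 =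
      (4 * x ^ 3 + 6 * x ^ 2 + 4 * x + 1) / (x ^ 4 * (x + 1) ^ 4) := by
    field_simp
    ring
  rw [e, eS]
  set S := (4 * x ^ 3 + 6 * x ^ 2 + 4 * x + 1) / (x ^ 4 * (x + 1) ^ 4) with hS
  have hA : 1 / (3 * x ^ 3 * (x + 1) ^ 3) ≤ S := by
    rw [hS, show 1 / (3 * x ^ 3 * (x + 1) ^ 3) = (x * (x + 1) / 3) / (x ^ 4 * (x + 1) ^ 4) by
      field_simp]
    gcongr
    nlinarith [pow_pos hx0 3, pow_pos hx0 2]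
  have hB : (12 * x ^ 2 + 8 * x + 2) / (3 * x ^ 3 * (x + 1) ^ 4) ≤ S := by
    rw [hS, show (12 * x ^ 2 + 8 * x + 2) / (3 * x ^ 3 * (x + 1) ^ 4) =
      (x * (12 * x ^ 2 + 8 * x + 2) / 3) / (x ^ 4 * (x + 1) ^ 4) by field_simp]
    gcongr
    nlinarith [pow_pos hx0 3, pow_pos hx0 2]
  have hR : 1 / ((x + 1) ^ 4 * (a ^ 2 + (x + 1) ^ 2)) ≤ S := by
    have h1 : 1 / ((x + 1) ^ 4 * (a ^ 2 + (x + 1) ^ 2)) ≤ 1 / ((x + 1) ^ 4 * x) := by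
      gcongr
      nlinarith [sq_nonneg a]
    refine h1.trans ?_
    rw [hS, show 1 / ((x + 1) ^ 4 * x) = x ^ 3 / (x ^ 4 * (x + 1) ^ 4) by field_simp]
    gcongr
    nlinarith [pow_pos hx0 3, pow_pos hx0 2]
  have hA0 : 0 ≤ 1 / (3 * x ^ 3 * (x + 1) ^ 3) := by positivity
  have hB0 : 0 ≤ (12 * x ^ 2 + 8 * x + 2) / (3 * x ^ 3 * (x + 1) ^ 4) := by positivity
  have hR0 : 0 ≤ 1 / ((x + 1) ^ 4 * (a ^ 2 + (x + 1) ^ 2)) := by positivity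
  have hB1 := mul_le_mul_of_nonneg_left hB (by positivity : 0 ≤ a ^ 2)
  have hR1 := mul_le_mul_of_nonneg_left hR (by positivity : 0 ≤ 2 * a ^ 4)
  have hB2 := mul_nonneg (by positivity : 0 ≤ a ^ 2) hB0
  have hR2 := mul_nonneg (by positivity : 0 ≤ 2 * a ^ 4) hR0
  rw [abs_le]
  constructor <;> linarith

lemma aux_abs (a : ℝ) (ha : 0 < a) (n : ℕ) (hn : 1 ≤ n) :
    |(1 / a ^ 2 + 2 * ∑ k ∈ Finset.Icc 1 n, 1 / (a ^ 2 + (k : ℝ) ^ 2)) -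
            (π / a * (Real.cosh (π * a) / Real.sinh (π * a)) - 2 / (n : ℝ) + 1 / (n : ℝ) ^ 2 +
              (2 * a ^ 2 - 1) / (3 * (n : ℝ) ^ 3))| ≤
          (1 + a ^ 2 + 2 * a ^ 4) / (n : ℝ) ^ 4 := by
  set M := 1 + a ^ 2 + 2 * a ^ 4 with hM
  set L := π / a * (Real.cosh (π * a) / Real.sinh (π * a)) with hL
  set D : ℕ → ℝ := fun n => (1 / a ^ 2 + 2 * ∑ k ∈ Finset.Icc 1 n, 1 / (a ^ 2 + (k : ℝ) ^ 2)) -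
            (L - 2 / (n : ℝ) + 1 / (n : ℝ) ^ 2 + (2 * a ^ 2 - 1) / (3 * (n : ℝ) ^ 3)) with hD
  have hstep : ∀ m : ℕ, 1 ≤ m → |D (m + 1) - D m| ≤
      M / (m : ℝ) ^ 4 - M / ((m + 1 : ℕ) : ℝ) ^ 4 := by
    intro m hm
    have := aux_step a m (by exact_mod_cast hm)
    convert this using 1
    · congr 1
      simp only [hD]
      rw [Finset.sum_Icc_succ_top (by omega)]
      push_cast
      ring
    · push_cast
      ring
  have hz : ∀ (c : ℝ) (p : ℕ), p ≠ 0 → Tendsto (fun n : ℕ => c / (n : ℝ) ^ p) atTop (nhds 0) :=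
    fun c p hp => tendsto_const_nhds.div_atTop
      ((tendsto_pow_atTop hp).comp tendsto_natCast_atTop_atTop)
  have hD0 : Tendsto D atTop (nhds 0) := by
    have h := (aux_tendsto_coth a ha).sub ((((hz 2 1 (by simp)).const_sub L).add
      (hz 1 2 (by simp))).add (hz ((2 * a ^ 2 - 1) / 3) 3 (by simp)))
    simp only [sub_zero, add_zero, ← hL, sub_self] at h
    refine h.congr fun n => ?_
    simp only [hD, pow_one, div_div]
  have hup : Tendsto (fun j : ℕ => D (n + j) + M / ((n + j : ℕ) : ℝ) ^ 4) atTop (nhds 0) := by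
    have h := (hD0.add (hz M 4 (by simp))).comp (tendsto_add_atTop_nat n)
    simpa [Function.comp_def, add_comm n] using h
  have hlo : Tendsto (fun j : ℕ => D (n + j) - M / ((n + j : ℕ) : ℝ) ^ 4) atTop (nhds 0) := by
    have h := (hD0.sub (hz M 4 (by simp))).comp (tendsto_add_atTop_nat n)
    simpa [Function.comp_def, add_comm n] using h
  have hanti : Antitone (fun j : ℕ => D (n + j) + M / ((n + j : ℕ) : ℝ) ^ 4) := by
    refine antitone_nat_of_succ_le fun j => ?_
    have := (abs_le.1 (hstep (n + j) (by omega))).2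
    rw [← add_assoc]
    linarith
  have hmono : Monotone (fun j : ℕ => D (n + j) - M / ((n + j : ℕ) : ℝ) ^ 4) := by
    refine monotone_nat_of_le_succ fun j => ?_
    have := (abs_le.1 (hstep (n + j) (by omega))).1
    rw [← add_assoc]
    linarith
  have h1 := hanti.le_of_tendsto hup 0
  have h2 := hmono.ge_of_tendsto hlo 0
  simp only [add_zero] at h1 h2
  change |D n| ≤ _
  rw [abs_le]
  constructor <;> linarith

/-- Euler–MacLaurin expansion of the partial sums
`G_n(a) = 1/a² + 2∑_{k=1}^n 1/(a²+k²)`: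
`G_n(a) = (π/a)coth(πa) − 2/n + 1/n² + (2a²−1)/(3n³) + O(a⁴/n⁴)` as `n → ∞`,
uniformly for `a` in compact subsets of `(0,∞)`. -/
theorem partial_sum_euler_maclaurin :
    (∀ a : ℝ, 1 < a →
      (fun n : ℕ =>
          (1 / a ^ 2 + 2 * ∑ k ∈ Finset.Icc 1 n, 1 / (a ^ 2 + (k : ℝ) ^ 2)) -
            (π / a * (Real.cosh (π * a) / Real.sinh (π * a)) - 2 / (n : ℝ) + 1 / (n : ℝ) ^ 2 +
              (2 * a ^ 2 - 1) / (3 * (n : ℝ) ^ 3)))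
        =O[atTop] (fun n : ℕ => a ^ 4 / (n : ℝ) ^ 4)) ∧
    ∀ K : Set ℝ, IsCompact K → K ⊆ Set.Ioi 0 →
      ∃ C : ℝ, ∀ a ∈ K, ∀ n : ℕ, 1 ≤ n →
        |(1 / a ^ 2 + 2 * ∑ k ∈ Finset.Icc 1 n, 1 / (a ^ 2 + (k : ℝ) ^ 2)) -
            (π / a * (Real.cosh (π * a) / Real.sinh (π * a)) - 2 / (n : ℝ) + 1 / (n : ℝ) ^ 2 +
              (2 * a ^ 2 - 1) / (3 * (n : ℝ) ^ 3))| ≤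
          C * a ^ 4 / (n : ℝ) ^ 4 := by
  constructor
  · intro a ha
    refine IsBigO.of_bound ((1 + a ^ 2 + 2 * a ^ 4) / a ^ 4) ?_
    filter_upwards [eventually_ge_atTop 1] with n hn
    have ha0 : 0 < a := by linarith
    have hn0 : (0 : ℝ) < n := by exact_mod_cast hn
    rw [Real.norm_eq_abs, Real.norm_eq_abs, abs_of_pos (by positivity : 0 < a ^ 4 / (n : ℝ) ^ 4)]
    refine (aux_abs a ha0 n hn).trans (le_of_eq ?_)
    field_simp
  · intro K hK hKs
    have hc : ContinuousOn (fun a : ℝ => (1 + a ^ 2 + 2 * a ^ 4) / a ^ 4) K := by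
      refine ContinuousOn.div (by fun_prop) (by fun_prop) fun a ha => ?_
      have : (0 : ℝ) < a := hKs ha
      positivity
    obtain ⟨C, hC⟩ := hK.bddAbove_image hc
    refine ⟨C, fun a ha n hn => ?_⟩
    have ha0 : (0 : ℝ) < a := hKs ha
    have h := hC (Set.mem_image_of_mem _ ha)
    refine (aux_abs a ha0 n hn).trans ?_
    gcongr
    exact (div_le_iff₀ (by positivity)).1 h
end
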